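/- arXiv:2506.20669 — 2 statements merged into one kernel-verified Lean document; each statement's English description precedes it below -/
import Mathlib

section
/- If n and m are both odd, then the n × m Knight's grid minus the centre vertex ((n−1)/2, (m−1)/2) is opposable via (x,y) ↦ (n−x−1, m−y−1); hence the Knight's grid is almost opposable. -/
/-- An *opposition* of a simple graph `G`: an automorphism `f` of order two such that
`f v ∉ N[v]` for every vertex `v` (i.e. `f v ≠ v` and `f v` is not adjacent to `v`). -/
def IsOpposition {V : Type*} (G : SimpleGraph V) (f : V → V) : Prop :=
  (∀ u v, G.Adj u v ↔ G.Adj (f u) (f v)) ∧ (∀ v, f (f v) = v) ∧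
    ∀ v, f v ≠ v ∧ ¬ G.Adj v (f v)

/-- A graph is *opposable* if it admits an opposition. -/
def Opposable {V : Type*} (G : SimpleGraph V) : Prop := ∃ f, IsOpposition G f

/-- `f` is an opposition of the subgraph of `G` induced by the vertex set `S`. -/
def IsOppositionOn {V : Type*} (G : SimpleGraph V) (S : Set V) (f : V → V) : Prop :=
  (∀ v ∈ S, f v ∈ S) ∧ (∀ u ∈ S, ∀ v ∈ S, (G.Adj u v ↔ G.Adj (f u) (f v))) ∧
    (∀ v ∈ S, f (f v) = v) ∧ ∀ v ∈ S, f v ≠ v ∧ ¬ G.Adj v (f v)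

/-- A graph is *almost opposable* if deleting some admissible set `S`
(`u ∈ S ⊆ N[u]` for some vertex `u`) yields an opposable graph. -/
def AlmostOpposable {V : Type*} (G : SimpleGraph V) : Prop :=
  ∃ (u : V) (S : Set V), u ∈ S ∧ (∀ v ∈ S, v = u ∨ G.Adj u v) ∧
    ∃ f, IsOppositionOn G Sᶜ f

/-- The `n × m` Knight's grid. -/
def knightGrid (n m : ℕ) : SimpleGraph (Fin n × Fin m) :=
  SimpleGraph.fromRel fun p q =>
    (|(p.1 : ℤ) - (q.1 : ℤ)| = 1 ∧ |(p.2 : ℤ) - (q.2 : ℤ)| = 2) ∨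
    (|(p.1 : ℤ) - (q.1 : ℤ)| = 2 ∧ |(p.2 : ℤ) - (q.2 : ℤ)| = 1)

/-! A knight's move changes the colour of the square, i.e. the parity of `x + y`. The half-turn
`(x, y) ↦ (n - 1 - x, m - 1 - y)` preserves that colour when `n + m` is even, so it never moves a
square to an adjacent one. It is therefore an opposition off its fixed points, and for odd `n` and
`m` the centre is the only fixed point. -/

section Opposition

variable {V : Type*} {G : SimpleGraph V}

theorem isOppositionOn_compl_fixedPoints (σ : G ≃g G) (hσ : Function.Involutive σ)
    (hadj : ∀ v, ¬ G.Adj v (σ v)) : IsOppositionOn G (Function.fixedPoints σ)ᶜ σ :=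
  ⟨fun _ hv hσv => hv (σ.injective hσv), fun _ _ _ _ => σ.map_adj_iff.symm, fun v _ => hσ v,
    fun v hv => ⟨hv, hadj v⟩⟩

theorem IsOppositionOn.almostOpposable {u : V} {f : V → V} (h : IsOppositionOn G {u}ᶜ f) :
    AlmostOpposable G :=
  ⟨u, {u}, rfl, fun _ hv => Or.inl hv, f, h⟩

end Opposition

section KnightGrid

variable {n m : ℕ}

theorem abs_val_rev_sub_val_rev (i j : Fin n) :
    |(i.rev : ℤ) - (j.rev : ℤ)| = |(i : ℤ) - (j : ℤ)| := by
  grind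

theorem rev_eq_self_iff {i : Fin n} : i.rev = i ↔ 2 * (i : ℕ) + 1 = n := by
  rw [Fin.ext_iff, Fin.val_rev]
  omega

theorem knightGrid_adj {p q : Fin n × Fin m} :
    (knightGrid n m).Adj p q ↔
      (|(p.1 : ℤ) - (q.1 : ℤ)| = 1 ∧ |(p.2 : ℤ) - (q.2 : ℤ)| = 2) ∨
      (|(p.1 : ℤ) - (q.1 : ℤ)| = 2 ∧ |(p.2 : ℤ) - (q.2 : ℤ)| = 1) := by
  rw [knightGrid, SimpleGraph.fromRel_adj, abs_sub_comm (q.1 : ℤ), abs_sub_comm (q.2 : ℤ), or_self,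
    and_iff_right_iff_imp]
  rintro h rfl
  simp at h

theorem even_add_iff_not_of_knightGrid_adj {p q : Fin n × Fin m}
    (h : (knightGrid n m).Adj p q) :
    Even (p.1 + p.2 : ℕ) ↔ ¬ Even (q.1 + q.2 : ℕ) := by
  rw [knightGrid_adj] at h
  grind

/-- The half-turn of the board about its centre, as an automorphism of the Knight's grid. -/
def knightGridHalfTurn (n m : ℕ) : knightGrid n m ≃g knightGrid n m where
  toEquiv := Fin.revPerm.prodCongr Fin.revPerm
  map_rel_iff' := by
    simp only [knightGrid_adj, Equiv.prodCongr_apply, Prod.map_fst, Prod.map_snd,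
      Fin.revPerm_apply, abs_val_rev_sub_val_rev, implies_true]

theorem knightGridHalfTurn_apply (p : Fin n × Fin m) :
    knightGridHalfTurn n m p = (p.1.rev, p.2.rev) := rfl

theorem knightGridHalfTurn_involutive : Function.Involutive (knightGridHalfTurn n m) :=
  Fin.rev_involutive.prodMap Fin.rev_involutive

theorem even_add_knightGridHalfTurn_iff (h : Even (n + m)) (p : Fin n × Fin m) :
    Even ((knightGridHalfTurn n m p).1 + (knightGridHalfTurn n m p).2 : ℕ) ↔
      Even (p.1 + p.2 : ℕ) := by
  have hsum : ((p.1.rev + p.2.rev : ℕ) + (p.1 + p.2 : ℕ)) + 2 = n + m := by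
    rw [Fin.val_rev, Fin.val_rev]
    omega
  rw [knightGridHalfTurn_apply]
  grind

theorem not_knightGrid_adj_halfTurn (h : Even (n + m)) (p : Fin n × Fin m) :
    ¬ (knightGrid n m).Adj p (knightGridHalfTurn n m p) := fun hadj =>
  iff_not_self
    ((even_add_knightGridHalfTurn_iff h p).trans (even_add_iff_not_of_knightGrid_adj hadj))

theorem mem_fixedPoints_knightGridHalfTurn {p : Fin n × Fin m} :
    p ∈ Function.fixedPoints (knightGridHalfTurn n m) ↔
      2 * (p.1 : ℕ) + 1 = n ∧ 2 * (p.2 : ℕ) + 1 = m := by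
  rw [Function.mem_fixedPoints_iff, knightGridHalfTurn_apply, Prod.ext_iff, rev_eq_self_iff,
    rev_eq_self_iff]

end KnightGrid

theorem knightGrid_odd_almostOpposable (n m : ℕ) (hn : Odd n) (hm : Odd m) :
    IsOppositionOn (knightGrid n m)
      {p | p ≠ (⟨(n - 1) / 2, by obtain ⟨a, ha⟩ := hn; omega⟩,
                ⟨(m - 1) / 2, by obtain ⟨a, ha⟩ := hm; omega⟩)}
      (fun p => (p.1.rev, p.2.rev)) ∧
    AlmostOpposable (knightGrid n m) := by
  set c : Fin n × Fin m := (⟨(n - 1) / 2, _⟩, ⟨(m - 1) / 2, _⟩)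
  have hfixed : Function.fixedPoints (knightGridHalfTurn n m) = {c} := by
    ext p
    rw [mem_fixedPoints_knightGridHalfTurn, Set.mem_singleton_iff, Prod.ext_iff, Fin.ext_iff,
      Fin.ext_iff]
    grind
  have hopp : IsOppositionOn (knightGrid n m) {c}ᶜ (knightGridHalfTurn n m) :=
    hfixed ▸ isOppositionOn_compl_fixedPoints _ knightGridHalfTurn_involutive
      (not_knightGrid_adj_halfTurn (hn.add_odd hm))
  exact ⟨hopp, hopp.almostOpposable⟩
end

section
/- If n and m are both odd, then deleting the closed neighbourhood of the centre vertex ((n−1)/2, (m−1)/2) from the n × m Bishop's grid yields a graph on which (x,y) ↦ (n−x−1, m−y−1) is an opposition; hence the Bishop's grid is almost opposable. -/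
/-- The `n × m` Bishop's grid. -/
def bishopGrid (n m : ℕ) : SimpleGraph (Fin n × Fin m) :=
  SimpleGraph.fromRel fun p q =>
    |(p.1 : ℤ) - (q.1 : ℤ)| = |(p.2 : ℤ) - (q.2 : ℤ)|

/-!
Any involutive automorphism `f` is an opposition on the set of vertices `v` with `f v ∉ N[v]`. For
the half-turn of the grid and a vertex `c` it fixes, the displacement from `v` to its image is
twice the displacement from `v` to `c`; hence the image lies in `N[v]`, i.e. on a diagonal through
`v`, exactly when `c` does, and the set in question is the complement of `N[c]`.
-/

namespace IsOppositionOn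

variable {V : Type*} {G : SimpleGraph V}

theorem of_involutive (f : G ≃g G) (hf : Function.Involutive f) :
    IsOppositionOn G {v | f v ∉ insert v (G.neighborSet v)} f := by
  refine ⟨fun v hv => ?_, fun _ _ _ _ => f.map_adj_iff.symm, fun v _ => hf v,
    fun v hv => not_or.mp hv⟩
  simpa only [Set.mem_ofPred_eq, Set.mem_insert_iff, SimpleGraph.mem_neighborSet,
    f.map_adj_iff, f.injective.eq_iff] using hv

theorem almostOpposable_s17 {u : V} {f : V → V}
    (h : IsOppositionOn G (insert u (G.neighborSet u))ᶜ f) : AlmostOpposable G :=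
  ⟨u, insert u (G.neighborSet u), Set.mem_insert _ _, fun _ hv => hv, f, h⟩

end IsOppositionOn

theorem intCast_fin_rev {n : ℕ} (i : Fin n) : (i.rev : ℤ) = n - 1 - i := by
  rw [Fin.val_rev]
  omega

theorem fin_rev_eq_self_iff {n : ℕ} {i : Fin n} : i.rev = i ↔ 2 * (i : ℕ) + 1 = n := by
  rw [Fin.ext_iff, Fin.val_rev]
  omega

theorem intCast_sub_fin_rev_of_rev_eq {n : ℕ} {c : Fin n} (hc : c.rev = c) (i : Fin n) :
    (i : ℤ) - i.rev = 2 * (i - c) := by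
  have hn : (c : ℤ) = n - 1 - c := by rw [← intCast_fin_rev, hc]
  rw [intCast_fin_rev]
  linarith

namespace bishopGrid

variable {n m : ℕ}

theorem adj_iff {p q : Fin n × Fin m} :
    (bishopGrid n m).Adj p q ↔ p ≠ q ∧ |(p.1 : ℤ) - q.1| = |(p.2 : ℤ) - q.2| := by
  rw [bishopGrid, SimpleGraph.fromRel_adj, abs_sub_comm (q.1 : ℤ), abs_sub_comm (q.2 : ℤ), or_self]

theorem mem_insert_neighborSet_iff {p q : Fin n × Fin m} :
    q ∈ insert p ((bishopGrid n m).neighborSet p) ↔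
      |(p.1 : ℤ) - q.1| = |(p.2 : ℤ) - q.2| := by
  rw [Set.mem_insert_iff, SimpleGraph.mem_neighborSet, adj_iff]
  by_cases h : q = p
  · simp [h]
  · simp [h, Ne.symm h]

variable (n m) in
/-- The half-turn `(x, y) ↦ (n - x - 1, m - y - 1)` of the `n × m` Bishop's grid, as a graph
automorphism. -/
def halfTurn : bishopGrid n m ≃g bishopGrid n m where
  toEquiv := Fin.revPerm.prodCongr Fin.revPerm
  map_rel_iff' {p q} := by
    have hsub {k : ℕ} (i j : Fin k) : (i.rev : ℤ) - j.rev = j - i := by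
      rw [intCast_fin_rev, intCast_fin_rev, sub_sub_sub_cancel_left]
    rw [adj_iff, adj_iff, (Equiv.injective _).ne_iff]
    simp only [Equiv.prodCongr_apply, Prod.map_fst, Prod.map_snd, Fin.revPerm_apply, hsub,
      abs_sub_comm]

theorem halfTurn_involutive : Function.Involutive (halfTurn n m) := fun p =>
  Prod.ext (Fin.rev_rev p.1) (Fin.rev_rev p.2)

theorem halfTurn_eq_self_iff {p : Fin n × Fin m} :
    halfTurn n m p = p ↔ 2 * (p.1 : ℕ) + 1 = n ∧ 2 * (p.2 : ℕ) + 1 = m :=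
  Prod.ext_iff.trans (and_congr fin_rev_eq_self_iff fin_rev_eq_self_iff)

theorem halfTurn_mem_insert_neighborSet_iff {c : Fin n × Fin m} (hc : halfTurn n m c = c)
    (p : Fin n × Fin m) :
    halfTurn n m p ∈ insert p ((bishopGrid n m).neighborSet p) ↔
      p ∈ insert c ((bishopGrid n m).neighborSet c) := by
  have hdisp₁ : (p.1 : ℤ) - (halfTurn n m p).1 = 2 * (p.1 - c.1) :=
    intCast_sub_fin_rev_of_rev_eq (congrArg Prod.fst hc) p.1
  have hdisp₂ : (p.2 : ℤ) - (halfTurn n m p).2 = 2 * (p.2 - c.2) :=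
    intCast_sub_fin_rev_of_rev_eq (congrArg Prod.snd hc) p.2
  rw [mem_insert_neighborSet_iff, mem_insert_neighborSet_iff, hdisp₁, hdisp₂, abs_mul, abs_mul,
    mul_right_inj' (abs_ne_zero.mpr two_ne_zero), abs_sub_comm, abs_sub_comm (p.2 : ℤ)]

theorem isOppositionOn_halfTurn {c : Fin n × Fin m} (hc : halfTurn n m c = c) :
    IsOppositionOn (bishopGrid n m) (insert c ((bishopGrid n m).neighborSet c))ᶜ
      (halfTurn n m) := by
  have hcompl : (insert c ((bishopGrid n m).neighborSet c))ᶜ =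
      {p | halfTurn n m p ∉ insert p ((bishopGrid n m).neighborSet p)} :=
    Set.ext fun p => (halfTurn_mem_insert_neighborSet_iff hc p).not.symm
  rw [hcompl]
  exact .of_involutive (halfTurn n m) halfTurn_involutive

end bishopGrid

theorem bishopGrid_odd_almostOpposable (n m : ℕ) (hn : Odd n) (hm : Odd m) :
    IsOppositionOn (bishopGrid n m)
      {p | ¬ (p = (⟨(n - 1) / 2, by obtain ⟨a, ha⟩ := hn; omega⟩,
                   ⟨(m - 1) / 2, by obtain ⟨a, ha⟩ := hm; omega⟩) ∨
              (bishopGrid n m).Adj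
                (⟨(n - 1) / 2, by obtain ⟨a, ha⟩ := hn; omega⟩,
                 ⟨(m - 1) / 2, by obtain ⟨a, ha⟩ := hm; omega⟩) p)}
      (fun p => (p.1.rev, p.2.rev)) ∧
    AlmostOpposable (bishopGrid n m) := by
  have hx : 2 * ((n - 1) / 2) + 1 = n := by
    obtain ⟨k, rfl⟩ := hn
    omega
  have hy : 2 * ((m - 1) / 2) + 1 = m := by
    obtain ⟨k, rfl⟩ := hm
    omega
  let centre : Fin n × Fin m := (⟨(n - 1) / 2, by omega⟩, ⟨(m - 1) / 2, by omega⟩)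
  have hcentre : bishopGrid.halfTurn n m centre = centre :=
    bishopGrid.halfTurn_eq_self_iff.mpr ⟨hx, hy⟩
  have hopp := bishopGrid.isOppositionOn_halfTurn hcentre
  exact ⟨hopp, hopp.almostOpposable_s17⟩
end
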